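/- The following conditions are equivalent: (i) the sequence σ_n = √(Var(S_n)) is bounded; (ii) liminf_{n→∞} σ_n < ∞; (iii) for every j > 0 one can write f_j(X_j) = E[f_j(X_j)] + h_j(X_j) − h_{j−1}(X_{j−1}) + M_j(X_{j−1}, X_j) almost surely, where the h_j are measurable and uniformly bounded, (M_j(X_{j−1}, X_j))_{j≥1} is a uniformly bounded martingale-difference sequence with respect to the natural filtration of the chain, and Σ_{j=1}^∞ Var(M_j(X_{j−1}, X_j)) < ∞ (so that Σ_{j=1}^∞ M_j(X_{j−1}, X_j) converges almost surely and in L^p for all 1 ≤ p < ∞). -/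

import Mathlib

open MeasureTheory ProbabilityTheory Filter
open scoped ENNReal NNReal

noncomputable section

variable {Ω : Type*} [MeasurableSpace Ω] {𝒳 : ℕ → Type*} [∀ j, MeasurableSpace (𝒳 j)]

/-- The σ-algebra generated by `X_0, …, X_j`. -/
def pastSigma (X : ∀ j, Ω → 𝒳 j) (j : ℕ) : MeasurableSpace Ω :=
  ⨆ i ∈ Finset.range (j + 1), MeasurableSpace.comap (X i) inferInstance

/-- `X` is an inhomogeneous Markov chain (on the probability space `(Ω, μ)`) whose `n`-step
transition probabilities from time `j` are given by the Markov kernels `κ j n`: for every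
measurable `Γ`, `ℙ(X_{j+n} ∈ Γ | X_0, …, X_j) = (κ j n) (X j) Γ` a.s. -/
structure IsInhomMarkov (μ : Measure Ω) (X : ∀ j, Ω → 𝒳 j)
    (κ : ∀ j n, Kernel (𝒳 j) (𝒳 (j + n))) : Prop where
  meas : ∀ j, Measurable (X j)
  isMarkovKernel : ∀ j n, IsMarkovKernel (κ j n)
  cond : ∀ j n (Γ : Set (𝒳 (j + n))), MeasurableSet Γ →
    (μ[(fun ω => Γ.indicator (fun _ => (1 : ℝ)) (X (j + n) ω)) | pastSigma X j])
      =ᵐ[μ] fun ω => (κ j n (X j ω) Γ).toReal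

lemma vd_past_le {X : ∀ j, Ω → 𝒳 j} (hX : ∀ j, Measurable (X j)) (j : ℕ) :
    pastSigma X j ≤ (inferInstance : MeasurableSpace Ω) :=
  iSup₂_le fun i _ => (hX i).comap_le

lemma vd_past_mono (X : ∀ j, Ω → 𝒳 j) {i j : ℕ} (hij : i ≤ j) :
    pastSigma X i ≤ pastSigma X j := by
  refine iSup₂_le fun k hk => ?_
  refine le_iSup₂_of_le k ?_ le_rfl
  simp at hk ⊢; omega

lemma vd_meas_past (X : ∀ j, Ω → 𝒳 j) {i j : ℕ} (hij : i ≤ j) :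
    Measurable[pastSigma X j] (X i) := by
  rw [measurable_iff_comap_le]
  refine le_iSup₂_of_le i ?_ le_rfl
  simp; omega

lemma vd_bdd_int {μ : Measure Ω} [IsFiniteMeasure μ] {g : Ω → ℝ} (hg : Measurable g) (B : ℝ)
    (h : ∀ ω, |g ω| ≤ B) : Integrable g μ :=
  Integrable.of_bound hg.aestronglyMeasurable B (ae_of_all _ h)

/-- conditional expectation of a bounded function is given by the kernel -/
lemma vd_condExp {μ : Measure Ω} [IsProbabilityMeasure μ]
    {X : ∀ j, Ω → 𝒳 j} {κ : ∀ j n, Kernel (𝒳 j) (𝒳 (j + n))}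
    (hM : IsInhomMarkov μ X κ) (j n : ℕ) (φ : 𝒳 (j + n) → ℝ) (hφ : Measurable φ)
    (B : ℝ) (hB : ∀ x, |φ x| ≤ B) :
    (fun ω => ∫ y, φ y ∂(κ j n (X j ω))) =ᵐ[μ]
      μ[(fun ω => φ (X (j + n) ω)) | pastSigma X j] := by
  have := hM.isMarkovKernel j n
  have hle := vd_past_le hM.meas j
  have hmj := hM.meas j
  have hmn := hM.meas (j + n)
  have hψ : Measurable (fun x => ∫ y, φ y ∂(κ j n x)) :=
    (StronglyMeasurable.integral_kernel hφ.stronglyMeasurable).measurable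
  have hψB : ∀ x, |∫ y, φ y ∂(κ j n x)| ≤ B := by
    intro x
    have := norm_integral_le_of_norm_le_const (μ := κ j n x) (f := φ) (C := B) (ae_of_all _ hB)
    simpa using this
  refine ae_eq_condExp_of_forall_setIntegral_eq hle
    (vd_bdd_int (hφ.comp hmn) B fun _ => hB _) ?_ ?_ ?_
  · intro s _ _
    exact (vd_bdd_int (hψ.comp hmj) B fun _ => hψB _).integrableOn
  · intro s hs _
    have hs' := hle s hs
    have key : (μ.restrict s).map (X (j + n)) = (κ j n) ∘ₘ ((μ.restrict s).map (X j)) := by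
      ext Γ hΓ
      rw [Measure.map_apply hmn hΓ, Measure.bind_apply hΓ (Kernel.aemeasurable _),
        lintegral_map (Kernel.measurable_coe _ hΓ) hmj]
      have h1 := setIntegral_condExp (μ := μ) hle (f := fun ω => Γ.indicator (fun _ => (1 : ℝ)) (X (j + n) ω))
        (vd_bdd_int ((measurable_const.indicator hΓ).comp hmn) 1 (fun ω => by
          simp only [Set.indicator]; split_ifs <;> simp)) hs
      rw [setIntegral_congr_ae hs' ((hM.cond j n Γ hΓ).mono fun _ h _ => h)] at h1
      rw [integral_toReal (f := fun ω => κ j n (X j ω) Γ) ((Kernel.measurable_coe _ hΓ).comp hmj).aemeasurable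
        (ae_of_all _ fun ω => measure_lt_top _ _)] at h1
      have h2 : ∫ ω in s, Γ.indicator (fun _ => (1 : ℝ)) (X (j + n) ω) ∂μ
          = ((μ.restrict s) (X (j + n) ⁻¹' Γ)).toReal := by
        have : (fun ω => Γ.indicator (fun _ => (1 : ℝ)) (X (j + n) ω))
          = (X (j + n) ⁻¹' Γ).indicator (fun _ => (1 : ℝ)) := by
          ext ω; rfl
        rw [this, integral_indicator (hmn hΓ)]
        simp [measureReal_def]
      rw [h2] at h1
      symm
      refine (ENNReal.toReal_eq_toReal_iff' ?_ (measure_ne_top _ _)).1 h1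
      refine ((lintegral_mono (g := fun _ => 1) fun ω => prob_le_one).trans_lt ?_).ne
      simp
    have hint : Integrable φ ((κ j n) ∘ₘ ((μ.restrict s).map (X j))) := by
      rw [← key]
      have : IsFiniteMeasure ((μ.restrict s).map (X (j + n))) := inferInstance
      exact Integrable.of_bound hφ.aestronglyMeasurable B (ae_of_all _ hB)
    have h3 := hint
    rw [Measure.comp_eq_comp_const_apply] at h3
    replace h3 := Kernel.integral_comp h3
    rw [← Measure.comp_eq_comp_const_apply, Kernel.const_apply, ← key, integral_map hmn.aemeasurable hφ.aestronglyMeasurable,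
      integral_map hmj.aemeasurable hψ.aestronglyMeasurable] at h3
    exact h3.symm
  · exact (hψ.comp (vd_meas_past X le_rfl)).stronglyMeasurable.aestronglyMeasurable

def VdK (μ : Measure Ω) (X : ∀ j, Ω → 𝒳 j) (i : ℕ) (δ : ℝ) (Z : Ω → ℝ) : Prop :=
  ∃ (φ : 𝒳 i → ℝ) (a b : ℝ), Measurable φ ∧ (∀ x, a ≤ φ x ∧ φ x ≤ b) ∧ b - a ≤ δ ∧
    Z =ᵐ[μ] fun ω => φ (X i ω)

lemma vd_abs_le {a b t : ℝ} (h : a ≤ t ∧ t ≤ b) : |t| ≤ max |a| |b| :=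
  abs_le_max_abs_abs h.1 h.2

lemma vd_K_any {μ : Measure Ω} [IsProbabilityMeasure μ]
    {X : ∀ j, Ω → 𝒳 j} {κ : ∀ j n, Kernel (𝒳 j) (𝒳 (j + n))}
    (hM : IsInhomMarkov μ X κ) (j n : ℕ) (δ : ℝ) (Z : Ω → ℝ) (hZ : VdK μ X (j + n) δ Z) :
    VdK μ X j δ (μ[Z | pastSigma X j]) := by
  obtain ⟨φ, a, b, hφ, hab, hδ, hZ⟩ := hZ
  have := hM.isMarkovKernel j n
  have hB := fun x => vd_abs_le (hab x)
  refine ⟨fun x => ∫ y, φ y ∂(κ j n x), a, b,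
    (StronglyMeasurable.integral_kernel hφ.stronglyMeasurable).measurable, ?_, hδ, ?_⟩
  · intro x
    have hi : Integrable φ (κ j n x) :=
      Integrable.of_bound hφ.aestronglyMeasurable _ (ae_of_all _ hB)
    constructor
    · have := integral_mono (integrable_const a) hi (fun y => (hab y).1)
      simpa using this
    · have := integral_mono hi (integrable_const b) (fun y => (hab y).2)
      simpa using this
  · exact (condExp_congr_ae hZ).trans (vd_condExp hM j n φ hφ _ hB).symm

lemma vd_K_contract {μ : Measure Ω} [IsProbabilityMeasure μ]
    {X : ∀ j, Ω → 𝒳 j} {κ : ∀ j n, Kernel (𝒳 j) (𝒳 (j + n))}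
    (hM : IsInhomMarkov μ X κ) (n₀ : ℕ) (γ : ℝ) (hγ : γ ∈ Set.Ioo (0 : ℝ) 1)
    (m : ∀ j, Measure (𝒳 j)) (hm : ∀ j, IsProbabilityMeasure (m j))
    (hDoeblin : ∀ j (x : 𝒳 j) (Γ : Set (𝒳 (j + n₀))), MeasurableSet Γ →
      ENNReal.ofReal γ * m (j + n₀) Γ ≤ κ j n₀ x Γ)
    (j : ℕ) (δ : ℝ) (Z : Ω → ℝ) (hZ : VdK μ X (j + n₀) δ Z) :
    VdK μ X j ((1 - γ) * δ) (μ[Z | pastSigma X j]) := by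
  obtain ⟨φ, a, b, hφ, hab, hδ, hZ⟩ := hZ
  have := hM.isMarkovKernel j n₀
  have := hm (j + n₀)
  have hB := fun x => vd_abs_le (hab x)
  have him : Integrable φ (m (j + n₀)) :=
    Integrable.of_bound hφ.aestronglyMeasurable _ (ae_of_all _ hB)
  set I := ∫ y, φ y ∂(m (j + n₀)) with hI
  refine ⟨fun x => ∫ y, φ y ∂(κ j n₀ x), a + γ * (I - a), b - γ * (b - I),
    (StronglyMeasurable.integral_kernel hφ.stronglyMeasurable).measurable, ?_, ?_, ?_⟩
  · intro x
    have hi : Integrable φ (κ j n₀ x) :=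
      Integrable.of_bound hφ.aestronglyMeasurable _ (ae_of_all _ hB)
    have hle : ENNReal.ofReal γ • m (j + n₀) ≤ κ j n₀ x := by
      rw [Measure.le_iff]
      intro s hs
      simpa using hDoeblin j x s hs
    constructor
    · have h1 := integral_mono_measure hle (f := fun y => φ y - a)
        (ae_of_all _ fun y => sub_nonneg.2 (hab y).1) (hi.sub (integrable_const a))
      rw [integral_smul_measure, integral_sub him (integrable_const a),
        integral_sub hi (integrable_const a)] at h1
      simp [ENNReal.toReal_ofReal hγ.1.le] at h1
      linarith
    · have h1 := integral_mono_measure hle (f := fun y => b - φ y)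
        (ae_of_all _ fun y => sub_nonneg.2 (hab y).2) ((integrable_const b).sub hi)
      rw [integral_smul_measure, integral_sub (integrable_const b) him,
        integral_sub (integrable_const b) hi] at h1
      simp [ENNReal.toReal_ofReal hγ.1.le] at h1
      linarith
  · have := mul_le_mul_of_nonneg_left hδ (sub_nonneg.2 hγ.2.le)
    linarith
  · exact (condExp_congr_ae hZ).trans (vd_condExp hM j n₀ φ hφ _ hB).symm

lemma vd_K_iter {μ : Measure Ω} [IsProbabilityMeasure μ]
    {X : ∀ j, Ω → 𝒳 j} {κ : ∀ j n, Kernel (𝒳 j) (𝒳 (j + n))}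
    (hM : IsInhomMarkov μ X κ) (n₀ : ℕ) (γ : ℝ) (hγ : γ ∈ Set.Ioo (0 : ℝ) 1)
    (m : ∀ j, Measure (𝒳 j)) (hm : ∀ j, IsProbabilityMeasure (m j))
    (hDoeblin : ∀ j (x : 𝒳 j) (Γ : Set (𝒳 (j + n₀))), MeasurableSet Γ →
      ENNReal.ofReal γ * m (j + n₀) Γ ≤ κ j n₀ x Γ) (q : ℕ) :
    ∀ (j r : ℕ) (δ : ℝ) (Z : Ω → ℝ) (_ : VdK μ X (j + (q * n₀ + r)) δ Z),
    VdK μ X j ((1 - γ) ^ q * δ) (μ[Z | pastSigma X j]) := by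
  induction q with
  | zero =>
    intro j r δ Z hZ
    simpa using vd_K_any hM j (0 * n₀ + r) δ Z hZ
  | succ q ih =>
    intro j r δ Z hZ
    have h1 := ih (j + n₀) r δ Z (by convert hZ using 1; ring)
    have h2 := vd_K_contract hM n₀ γ hγ m hm hDoeblin j _ _ h1
    obtain ⟨φ, a, b, hφ, hab, hδ, hZ'⟩ := h2
    refine ⟨φ, a, b, hφ, hab, hδ.trans (le_of_eq (by ring)), ?_⟩
    exact (condExp_condExp_of_le (vd_past_mono X (by omega))
      (vd_past_le hM.meas (j + n₀))).symm.trans hZ'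

lemma vd_rate (n₀ : ℕ) (hn₀ : 0 < n₀) (γ : ℝ) (hγ : γ ∈ Set.Ioo (0 : ℝ) 1) :
    Summable fun k : ℕ => (1 - γ) ^ (k / n₀) := by
  have h0 : 0 < 1 - γ := sub_pos.2 hγ.2
  set ρ : ℝ := (1 - γ) ^ ((n₀ : ℝ)⁻¹) with hρ
  have hρ0 : 0 < ρ := Real.rpow_pos_of_pos h0 _
  have hρn : ρ ^ n₀ = 1 - γ := Real.rpow_inv_natCast_pow h0.le hn₀.ne'
  have hρ1 : ρ < 1 := Real.rpow_lt_one h0.le (by linarith [hγ.1]) (by positivity)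
  refine Summable.of_nonneg_of_le (fun k => by positivity) (fun k => ?_)
    ((summable_geometric_of_lt_one hρ0.le hρ1).mul_left (1 - γ)⁻¹)
  rw [inv_mul_eq_div, le_div_iff₀ h0, ← pow_succ]
  conv_lhs => rw [← hρn]
  rw [← pow_mul]
  refine pow_le_pow_of_le_one hρ0.le hρ1.le ?_
  have := Nat.div_add_mod k n₀
  have := Nat.mod_lt k hn₀
  rw [mul_add]; omega

/-- mean-zero functions: uniform decay of conditional expectations -/
lemma vd_decay {μ : Measure Ω} [IsProbabilityMeasure μ]
    {X : ∀ j, Ω → 𝒳 j} {κ : ∀ j n, Kernel (𝒳 j) (𝒳 (j + n))}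
    (hM : IsInhomMarkov μ X κ) (n₀ : ℕ) (γ : ℝ) (hγ : γ ∈ Set.Ioo (0 : ℝ) 1)
    (m : ∀ j, Measure (𝒳 j)) (hm : ∀ j, IsProbabilityMeasure (m j))
    (hDoeblin : ∀ j (x : 𝒳 j) (Γ : Set (𝒳 (j + n₀))), MeasurableSet Γ →
      ENNReal.ofReal γ * m (j + n₀) Γ ≤ κ j n₀ x Γ)
    (g : ∀ j, 𝒳 j → ℝ) (hg : ∀ j, Measurable (g j)) (B : ℝ) (hB : ∀ j x, |g j x| ≤ B)
    (hg0 : ∀ j, ∫ ω, g j (X j ω) ∂μ = 0) (j k : ℕ) :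
    ∃ ψ : 𝒳 j → ℝ, Measurable ψ ∧ (∀ x, |ψ x| ≤ (1 - γ) ^ (k / n₀) * (2 * B)) ∧
      μ[(fun ω => g (j + k) (X (j + k) ω)) | pastSigma X j] =ᵐ[μ] fun ω => ψ (X j ω) := by
  have h0 : VdK μ X (j + (k / n₀ * n₀ + k % n₀)) (2 * B) (fun ω => g (j + k) (X (j + k) ω)) := by
    have : k / n₀ * n₀ + k % n₀ = k := Nat.div_add_mod' k n₀
    rw [this]
    exact ⟨g (j + k), -B, B, hg _, fun x => abs_le.1 (hB _ x), by linarith, by rfl⟩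
  obtain ⟨ψ, a, b, hψ, hab, hδ, hZ⟩ := vd_K_iter hM n₀ γ hγ m hm hDoeblin _ _ _ _ _ h0
  refine ⟨ψ, hψ, ?_, hZ⟩
  have hi : Integrable (fun ω => ψ (X j ω)) μ :=
    vd_bdd_int (hψ.comp (hM.meas j)) _ fun ω => vd_abs_le (hab _)
  have h1 : ∫ ω, ψ (X j ω) ∂μ = 0 := by
    rw [← integral_congr_ae hZ, integral_condExp (vd_past_le hM.meas j), hg0]
  have h2 := integral_mono (integrable_const a) hi (fun ω => (hab (X j ω)).1)
  have h3 := integral_mono hi (integrable_const b) (fun ω => (hab (X j ω)).2)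
  simp [h1] at h2 h3
  intro x
  have := hab x
  refine le_trans ?_ hδ
  rw [abs_le]; constructor <;> linarith

lemma vd_orth {μ : Measure Ω} [IsProbabilityMeasure μ]
    {X : ∀ j, Ω → 𝒳 j} (hX : ∀ j, Measurable (X j))
    (M : ∀ j, 𝒳 j × 𝒳 (j + 1) → ℝ) (hM : ∀ j, Measurable (M j)) (B : ℝ)
    (hB : ∀ j y, |M j y| ≤ B)
    (hmd : ∀ j, (μ[(fun ω => M j (X j ω, X (j + 1) ω)) | pastSigma X j]) =ᵐ[μ] 0) (n : ℕ) :
    Measurable[pastSigma X n] (fun ω => ∑ j ∈ Finset.range n, M j (X j ω, X (j + 1) ω)) ∧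
    (∀ ω, |∑ j ∈ Finset.range n, M j (X j ω, X (j + 1) ω)| ≤ n * B) ∧
    ∫ ω, (∑ j ∈ Finset.range n, M j (X j ω, X (j + 1) ω)) ^ 2 ∂μ =
      ∑ j ∈ Finset.range n, variance (fun ω => M j (X j ω, X (j + 1) ω)) μ := by
  have hmeas : ∀ j, Measurable (fun ω => M j (X j ω, X (j + 1) ω)) := fun j =>
    (hM j).comp ((hX j).prodMk (hX (j + 1)))
  have hint : ∀ j, Integrable (fun ω => M j (X j ω, X (j + 1) ω)) μ := fun j =>
    vd_bdd_int (hmeas j) B fun ω => hB _ _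
  have hvar : ∀ j, variance (fun ω => M j (X j ω, X (j + 1) ω)) μ
      = ∫ ω, (M j (X j ω, X (j + 1) ω)) ^ 2 ∂μ := by
    intro j
    refine variance_of_integral_eq_zero (hmeas j).aemeasurable ?_
    rw [← integral_condExp (vd_past_le hX j), integral_congr_ae (hmd j)]
    simp
  induction n with
  | zero => simp
  | succ n ih =>
    obtain ⟨h1, h2, h3⟩ := ih
    have hT : Measurable (fun ω => ∑ j ∈ Finset.range n, M j (X j ω, X (j + 1) ω)) :=
      h1.mono (vd_past_le hX n) le_rfl
    refine ⟨?_, ?_, ?_⟩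
    · simp_rw [Finset.sum_range_succ]
      refine Measurable.add (h1.mono (vd_past_mono X (Nat.le_succ n)) le_rfl) ?_
      exact (hM n).comp ((vd_meas_past X (Nat.le_succ n)).prodMk (vd_meas_past X le_rfl))
    · intro ω
      rw [Finset.sum_range_succ]
      refine (abs_add_le _ _).trans ?_
      have := h2 ω
      have := hB n (X n ω, X (n + 1) ω)
      push_cast; linarith
    · simp_rw [Finset.sum_range_succ]
      rw [← h3, hvar n]
      set T := (fun ω => ∑ j ∈ Finset.range n, M j (X j ω, X (j + 1) ω)) with hTdef
      set N := (fun ω => M n (X n ω, X (n + 1) ω)) with hN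
      have hBN : ∀ ω, |N ω| ≤ B := fun ω => hB _ _
      have hTN : Integrable (T * N) μ := by
        refine vd_bdd_int (hT.mul (hmeas n)) (n * B * B) fun ω => ?_
        rw [Pi.mul_apply, abs_mul]
        exact mul_le_mul (h2 ω) (hBN ω) (abs_nonneg _) ((abs_nonneg _).trans (h2 ω))
      have hz : ∫ ω, (T * N) ω ∂μ = 0 := by
        rw [← integral_condExp (vd_past_le hX n)]
        rw [integral_congr_ae (condExp_mul_of_stronglyMeasurable_left h1.stronglyMeasurable hTN
          (hint n))]
        rw [integral_eq_zero_of_ae]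
        filter_upwards [hmd n] with ω hω
        have hω' : (μ[N | pastSigma X n]) ω = 0 := hω
        simp only [Pi.mul_apply, hω', Pi.zero_apply, mul_zero]
      have hT2 : Integrable (fun ω => T ω ^ 2) μ := by
        refine vd_bdd_int (hT.pow_const 2) ((n * B) ^ 2) fun ω => ?_
        rw [abs_pow]; exact pow_le_pow_left₀ (abs_nonneg _) (h2 ω) 2
      have hN2 : Integrable (fun ω => N ω ^ 2) μ := by
        refine vd_bdd_int ((hmeas n).pow_const 2) (B ^ 2) fun ω => ?_
        rw [abs_pow]; exact pow_le_pow_left₀ (abs_nonneg _) (hBN ω) 2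
      have : (fun ω => (∑ j ∈ Finset.range n, M j (X j ω, X (j + 1) ω)
          + M n (X n ω, X (n + 1) ω)) ^ 2) = fun ω => (T ω ^ 2 + N ω ^ 2) + 2 * (T * N) ω := by
        ext ω; simp only [hTdef, hN, Pi.mul_apply]; ring
      rw [this, integral_add (f := fun ω => T ω ^ 2 + N ω ^ 2) (hT2.add hN2) (hTN.const_mul 2), integral_add hT2 hN2,
        integral_const_mul, hz]
      ring

lemma vd_sandwich {μ : Measure Ω} [IsProbabilityMeasure μ]
    {X : ∀ j, Ω → 𝒳 j} (hX : ∀ j, Measurable (X j))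
    (f : ∀ j, 𝒳 j → ℝ) (hfmeas : ∀ j, Measurable (f j))
    (C : ℝ) (hbdd : ∀ j, ∀ᵐ ω ∂μ, |f j (X j ω)| ≤ C)
    (S : ℕ → Ω → ℝ) (hS : ∀ n ω, S n ω = ∑ j ∈ Finset.range n, f j (X j ω))
    (h : ∀ j, 𝒳 j → ℝ) (M : ∀ j, 𝒳 j × 𝒳 (j + 1) → ℝ)
    (A : ℝ) (hA : ∀ j x, |h j x| ≤ A)
    (hM : ∀ j, Measurable (M j)) (B : ℝ) (hB : ∀ j y, |M j y| ≤ B)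
    (hmd : ∀ j, (μ[(fun ω => M j (X j ω, X (j + 1) ω)) | pastSigma X j]) =ᵐ[μ] 0)
    (heq : ∀ j, ∀ᵐ ω ∂μ,
          f (j + 1) (X (j + 1) ω) =
            (∫ ω', f (j + 1) (X (j + 1) ω') ∂μ) + h (j + 1) (X (j + 1) ω)
              - h j (X j ω) + M j (X j ω, X (j + 1) ω)) :
    ∃ K : ℝ, ∀ n,
      variance (S (n + 1)) μ ≤
        2 * ∑ j ∈ Finset.range n, variance (fun ω => M j (X j ω, X (j + 1) ω)) μ + K ∧
      ∑ j ∈ Finset.range n, variance (fun ω => M j (X j ω, X (j + 1) ω)) μ ≤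
        2 * variance (S (n + 1)) μ + K := by
  refine ⟨2 * (2 * C + 2 * A) ^ 2, fun n => ?_⟩
  obtain ⟨h1, h2, h3⟩ := vd_orth hX M hM B hB hmd n
  have hfi : ∀ j, Integrable (fun ω => f j (X j ω)) μ := fun j =>
    Integrable.of_bound ((hfmeas j).comp (hX j)).aestronglyMeasurable C (hbdd j)
  have hSe : S (n + 1) = fun ω => ∑ j ∈ Finset.range (n + 1), f j (X j ω) := funext (hS _)
  have hSm : Measurable (S (n + 1)) := by
    rw [hSe]; exact Finset.measurable_sum _ fun j _ => (hfmeas j).comp (hX j)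
  have hall : ∀ᵐ ω ∂μ, ∀ j, |f j (X j ω)| ≤ C := ae_all_iff.2 hbdd
  set E := ∫ ω, S (n + 1) ω ∂μ with hE
  have hEs : E = ∑ j ∈ Finset.range (n + 1), ∫ ω, f j (X j ω) ∂μ := by
    rw [hE, hSe, integral_finsetSum _ fun j _ => hfi j]
  have hE0 : |∫ ω, f 0 (X 0 ω) ∂μ| ≤ C := by
    have := norm_integral_le_of_norm_le_const (f := fun ω => f 0 (X 0 ω)) (hbdd 0)
    simpa using this
  set T := (fun ω => ∑ j ∈ Finset.range n, M j (X j ω, X (j + 1) ω)) with hTdef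
  have hT : Measurable T := h1.mono (vd_past_le hX n) le_rfl
  have hT2 : Integrable (fun ω => T ω ^ 2) μ := by
    refine vd_bdd_int (hT.pow_const 2) ((n * B) ^ 2) fun ω => ?_
    rw [abs_pow]; exact pow_le_pow_left₀ (abs_nonneg _) (h2 ω) 2
  have hD : ∀ᵐ ω ∂μ, |S (n + 1) ω - E - T ω| ≤ 2 * C + 2 * A := by
    filter_upwards [hall, ae_all_iff.2 heq] with ω hω1 hω2
    have e1 : S (n + 1) ω - E - T ω
        = (f 0 (X 0 ω) - ∫ ω, f 0 (X 0 ω) ∂μ) + (h n (X n ω) - h 0 (X 0 ω)) := by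
      rw [hS, hEs, Finset.sum_range_succ', Finset.sum_range_succ',
        ← Finset.sum_range_sub (fun j => h j (X j ω)) n]
      have : ∑ j ∈ Finset.range n, f (j + 1) (X (j + 1) ω) =
        ∑ j ∈ Finset.range n, ((∫ ω', f (j + 1) (X (j + 1) ω') ∂μ)
          + (h (j + 1) (X (j + 1) ω) - h j (X j ω)) + M j (X j ω, X (j + 1) ω)) :=
        Finset.sum_congr rfl fun j _ => by rw [hω2 j]; ring
      rw [this, Finset.sum_add_distrib, Finset.sum_add_distrib]
      simp only [hTdef]
      ring
    rw [e1]
    have a1 := abs_le.1 (hω1 0)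
    have a2 := abs_le.1 hE0
    have a3 := abs_le.1 (hA n (X n ω))
    have a4 := abs_le.1 (hA 0 (X 0 ω))
    rw [abs_le]; constructor <;> linarith [a1.1, a1.2, a2.1, a2.2, a3.1, a3.2, a4.1, a4.2]
  have hSb : ∀ᵐ ω ∂μ, |S (n + 1) ω - E| ≤ 2 * C + 2 * A + n * B := by
    filter_upwards [hD] with ω hω
    have := abs_add_le (S (n + 1) ω - E - T ω) (T ω)
    rw [sub_add_cancel] at this
    linarith [h2 ω]
  have hS2 : Integrable (fun ω => (S (n + 1) ω - E) ^ 2) μ := by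
    refine Integrable.of_bound ((hSm.sub_const E).pow_const 2).aestronglyMeasurable
      ((2 * C + 2 * A + n * B) ^ 2) ?_
    filter_upwards [hSb] with ω hω
    rw [Real.norm_eq_abs, abs_pow]
    exact pow_le_pow_left₀ (abs_nonneg _) hω 2
  rw [variance_eq_integral hSm.aemeasurable, ← h3, ← integral_const_mul, ← integral_const_mul]
  have hc : 2 * (2 * C + 2 * A) ^ 2 = ∫ _ : Ω, 2 * (2 * C + 2 * A) ^ 2 ∂μ := by simp
  constructor
  · rw [hc, ← integral_add (hT2.const_mul 2) (integrable_const _)]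
    refine integral_mono_ae hS2 ((hT2.const_mul 2).add (integrable_const _)) ?_
    filter_upwards [hD] with ω hω
    have := sq_le_sq' (abs_le.1 hω).1 (abs_le.1 hω).2
    nlinarith [sq_nonneg (S (n + 1) ω - E - 2 * T ω)]
  · rw [hc, ← integral_add (hS2.const_mul 2) (integrable_const _)]
    refine integral_mono_ae hT2 ((hS2.const_mul 2).add (integrable_const _)) ?_
    filter_upwards [hD] with ω hω
    have := sq_le_sq' (abs_le.1 hω).1 (abs_le.1 hω).2
    nlinarith [sq_nonneg (2 * (S (n + 1) ω - E) - T ω)]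

lemma vd_construct {μ : Measure Ω} [IsProbabilityMeasure μ]
    {X : ∀ j, Ω → 𝒳 j} {κ : ∀ j n, Kernel (𝒳 j) (𝒳 (j + n))}
    (hM : IsInhomMarkov μ X κ) (n₀ : ℕ) (hn₀ : 0 < n₀) (γ : ℝ) (hγ : γ ∈ Set.Ioo (0 : ℝ) 1)
    (m : ∀ j, Measure (𝒳 j)) (hm : ∀ j, IsProbabilityMeasure (m j))
    (hDoeblin : ∀ j (x : 𝒳 j) (Γ : Set (𝒳 (j + n₀))), MeasurableSet Γ →
      ENNReal.ofReal γ * m (j + n₀) Γ ≤ κ j n₀ x Γ)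
    (f : ∀ j, 𝒳 j → ℝ) (hfmeas : ∀ j, Measurable (f j))
    (C : ℝ) (hbdd : ∀ j, ∀ᵐ ω ∂μ, |f j (X j ω)| ≤ C) :
    ∃ (h : ∀ j, 𝒳 j → ℝ) (M : ∀ j, 𝒳 j × 𝒳 (j + 1) → ℝ),
        (∀ j, Measurable (h j)) ∧ (∃ B, ∀ j x, |h j x| ≤ B) ∧
        (∀ j, Measurable (M j)) ∧ (∃ B, ∀ j y, |M j y| ≤ B) ∧
        (∀ j, (μ[(fun ω => M j (X j ω, X (j + 1) ω)) | pastSigma X j]) =ᵐ[μ] 0) ∧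
        (∀ j, ∀ᵐ ω ∂μ,
          f (j + 1) (X (j + 1) ω) =
            (∫ ω', f (j + 1) (X (j + 1) ω') ∂μ) + h (j + 1) (X (j + 1) ω)
              - h j (X j ω) + M j (X j ω, X (j + 1) ω)) := by
  have hC : 0 ≤ C := by
    obtain ⟨ω, hω⟩ := (hbdd 0).exists
    exact (abs_nonneg _).trans hω
  set c : ℕ → ℝ := fun j => ∫ ω, f j (X j ω) ∂μ with hc
  have hcC : ∀ j, |c j| ≤ C := by
    intro j
    have := norm_integral_le_of_norm_le_const (f := fun ω => f j (X j ω)) (hbdd j)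
    simpa using this
  set g : ∀ j, 𝒳 j → ℝ := fun j x => max (-C) (min C (f j x)) - c j with hg
  have hgm : ∀ j, Measurable (g j) := fun j =>
    (measurable_const.max (measurable_const.min (hfmeas j))).sub_const _
  have hgB : ∀ j x, |g j x| ≤ 2 * C := by
    intro j x
    have h1 : |max (-C) (min C (f j x))| ≤ C :=
      abs_le.2 ⟨le_max_left _ _, max_le (by linarith) (min_le_left _ _)⟩
    have := abs_sub (max (-C) (min C (f j x))) (c j)
    linarith [hcC j, abs_sub (max (-C) (min C (f j x))) (c j)]
  have hgf : ∀ j, ∀ᵐ ω ∂μ, g j (X j ω) = f j (X j ω) - c j := by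
    intro j
    filter_upwards [hbdd j] with ω hω
    simp only [hg]
    rw [min_eq_right (abs_le.1 hω).2, max_eq_right (abs_le.1 hω).1]
  have hfi : ∀ j, Integrable (fun ω => f j (X j ω)) μ := fun j =>
    Integrable.of_bound ((hfmeas j).comp (hM.meas j)).aestronglyMeasurable C (hbdd j)
  have hg0 : ∀ j, ∫ ω, g j (X j ω) ∂μ = 0 := by
    intro j
    rw [integral_congr_ae (hgf j), integral_sub (hfi j) (integrable_const _)]
    simp [hc]
  set r : ℕ → ℝ := fun k => (1 - γ) ^ (k / n₀) * (2 * (2 * C)) with hr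
  have hrs : Summable r := (vd_rate n₀ hn₀ γ hγ).mul_right _
  have hr0 : ∀ k, 0 ≤ r k := fun k => by
    have := sub_pos.2 hγ.2
    positivity
  set G : ℕ → Ω → ℝ := fun i ω => g i (X i ω) with hG
  have hdec : ∀ j k, ∃ ψ : 𝒳 j → ℝ, Measurable ψ ∧ (∀ x, |ψ x| ≤ r k) ∧
      μ[G (j + k) | pastSigma X j] =ᵐ[μ] fun ω => ψ (X j ω) := fun j k =>
    vd_decay hM n₀ γ hγ m hm hDoeblin g hgm (2 * C) hgB hg0 j k
  choose ψ hψm hψr hψ using hdec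
  have hsum : ∀ j x, Summable fun k => ψ j k x := fun j x =>
    Summable.of_norm_bounded hrs fun k => hψr j k x
  have hsum1 : ∀ j x, Summable fun k => ψ j (k + 1) x := fun j x =>
    (summable_nat_add_iff 1).2 (hsum j x)
  set R := ∑' k, r k with hR
  have hrs1 : Summable fun k => r (k + 1) := (summable_nat_add_iff 1).2 hrs
  have hRle : ∑' k, r (k + 1) ≤ R := by
    rw [hR, hrs.tsum_eq_zero_add]; linarith [hr0 0]
  set u : ∀ j, 𝒳 j → ℝ := fun j x => ∑' k, ψ j (k + 1) x with hu
  set v : ∀ j, 𝒳 j → ℝ := fun j x => ∑' k, ψ j k x with hv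
  have hum : ∀ j, Measurable (u j) := by
    intro j
    refine measurable_of_tendsto_metrizable
      (f := fun N x => ∑ k ∈ Finset.range N, ψ j (k + 1) x)
      (fun N => Finset.measurable_sum _ fun k _ => hψm j (k + 1)) ?_
    rw [tendsto_pi_nhds]
    exact fun x => (hsum1 j x).hasSum.tendsto_sum_nat
  have huB : ∀ j x, |u j x| ≤ R := fun j x =>
    (tsum_of_norm_bounded (f := fun k => ψ j (k + 1) x) hrs1.hasSum fun k => hψr j (k + 1) x).trans hRle
  have hvu : ∀ j, ∀ᵐ ω ∂μ, v j (X j ω) = g j (X j ω) + u j (X j ω) := by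
    intro j
    have h1 := hψ j 0
    rw [condExp_of_stronglyMeasurable (f := G (j + 0)) (vd_past_le hM.meas j)
      (((hgm j).comp (vd_meas_past X le_rfl)).stronglyMeasurable :
        StronglyMeasurable[pastSigma X j] (G (j + 0)))
      (vd_bdd_int ((hgm j).comp (hM.meas j)) (2 * C) fun _ => hgB _ _)] at h1
    filter_upwards [h1] with ω hω
    simp only [hv, hu]
    rw [(hsum j _).tsum_eq_zero_add, ← hω]
    rfl
  have hint : ∀ j k, Integrable (fun ω => ψ j k (X j ω)) μ := fun j k =>
    vd_bdd_int ((hψm j k).comp (hM.meas j)) (r k) fun ω => hψr j k _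
  have hui : ∀ j, Integrable (fun ω => u j (X j ω)) μ := fun j =>
    vd_bdd_int ((hum j).comp (hM.meas j)) R fun ω => huB _ _
  have hgui : ∀ j, Integrable (fun ω => g j (X j ω) + u j (X j ω)) μ := fun j =>
    (vd_bdd_int ((hgm j).comp (hM.meas j)) (2 * C) fun _ => hgB _ _).add (hui j)
  have hterm : ∀ j k, μ[(fun ω => ψ (j + 1) k (X (j + 1) ω)) | pastSigma X j]
      =ᵐ[μ] μ[(fun ω => ψ j (k + 1) (X j ω)) | pastSigma X j] := by
    intro j k
    have h1 := condExp_congr_ae (m := pastSigma X j) (hψ (j + 1) k)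
    have h2 := condExp_congr_ae (m := pastSigma X j) (hψ j (k + 1))
    have h3 := condExp_condExp_of_le (μ := μ) (f := G (j + (k + 1))) (vd_past_mono X (Nat.le_succ j))
      (vd_past_le hM.meas (j + 1))
    have h4 := condExp_condExp_of_le (μ := μ) (f := G (j + (k + 1))) (le_refl (pastSigma X j))
      (vd_past_le hM.meas j)
    rw [show j + 1 + k = j + (k + 1) by ring] at h1
    exact h1.symm.trans (h3.trans (h4.symm.trans h2))
  have hbsum : ∀ (s : ℕ → ℝ) (t : ℕ → ℝ) N, Summable t → (∀ k, |s k| ≤ t k) →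
      ‖∑ k ∈ Finset.range N, s k‖ ≤ ∑' k, t k := by
    intro s t N ht hst
    refine (norm_sum_le _ _).trans ((Finset.sum_le_sum fun k _ => hst k).trans ?_)
    exact ht.sum_le_tsum _ fun k _ => (abs_nonneg _).trans (hst k)
  have hlim : ∀ j, μ[(fun ω => v (j + 1) (X (j + 1) ω)) | pastSigma X j]
      =ᵐ[μ] μ[(fun ω => u j (X j ω)) | pastSigma X j] := by
    intro j
    refine tendsto_condExp_unique
      (fun N => ∑ k ∈ Finset.range N, fun ω => ψ (j + 1) k (X (j + 1) ω))
      (fun N => ∑ k ∈ Finset.range N, fun ω => ψ j (k + 1) (X j ω)) _ _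
      (fun N => integrable_finsetSum' _ fun k _ => hint (j + 1) k)
      (fun N => integrable_finsetSum' _ fun k _ => hint j (k + 1)) ?_ ?_ (fun _ => ∑' k, r k)
      (integrable_const _) (fun _ => ∑' k, r (k + 1)) (integrable_const _) ?_ ?_ ?_
    · refine ae_of_all _ fun ω => ?_
      simp only [Finset.sum_apply]
      exact (hsum (j + 1) _).hasSum.tendsto_sum_nat
    · refine ae_of_all _ fun ω => ?_
      simp only [Finset.sum_apply]
      exact (hsum1 j _).hasSum.tendsto_sum_nat
    · refine fun N => ae_of_all _ fun ω => ?_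
      simp only [Finset.sum_apply]
      exact hbsum _ _ N hrs fun k => hψr _ _ _
    · refine fun N => ae_of_all _ fun ω => ?_
      simp only [Finset.sum_apply]
      exact hbsum _ _ N hrs1 fun k => hψr _ _ _
    · intro N
      refine (condExp_finsetSum (fun k _ => hint (j + 1) k) _).trans
        (EventuallyEq.trans ?_ (condExp_finsetSum (fun k _ => hint j (k + 1)) _).symm)
      filter_upwards [ae_all_iff.2 (hterm j)] with ω hω
      simp only [Finset.sum_apply]
      exact Finset.sum_congr rfl fun k _ => hω k
  refine ⟨fun j x => - u j x, fun j y => (g (j + 1) y.2 + u (j + 1) y.2) - u j y.1,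
    fun j => (hum j).neg, ⟨R, fun j x => by rw [abs_neg]; exact huB j x⟩, ?_,
    ⟨2 * C + R + R, ?_⟩, ?_, ?_⟩
  · intro j
    exact (((hgm (j + 1)).comp measurable_snd).add ((hum (j + 1)).comp measurable_snd)).sub
      ((hum j).comp measurable_fst)
  · intro j y
    have a1 := abs_le.1 (hgB (j + 1) y.2)
    have a2 := abs_le.1 (huB (j + 1) y.2)
    have a3 := abs_le.1 (huB j y.1)
    rw [abs_le]; constructor <;> linarith [a1.1, a1.2, a2.1, a2.2, a3.1, a3.2]
  · intro j
    have h1 := condExp_sub (hgui (j + 1)) (hui j) (pastSigma X j)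
    have h2 := condExp_congr_ae (m := pastSigma X j) (hvu (j + 1))
    refine EventuallyEq.trans h1 ?_
    filter_upwards [h2, hlim j] with ω hω1 hω2
    simp only [Pi.sub_apply, Pi.zero_apply]
    rw [← hω1, hω2, sub_self]
  · intro j
    filter_upwards [hgf (j + 1)] with ω hω
    simp only [hω, hc]
    ring

/-- **Theorem (variance dichotomy under Doeblin minorization).**
Let `(X_j)` be an inhomogeneous Markov chain satisfying the uniform Doeblin minorization
condition `P_{j,n₀}(x,Γ) ≥ γ m_{j+n₀}(Γ)`, and let `Y_j = f_j(X_j)` be uniformly bounded.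
With `S_n = Σ_{j<n} Y_j` and `σ_n = √Var(S_n)`, the following are equivalent:
(i) `σ_n` is bounded; (ii) `liminf σ_n < ∞`; (iii) `f_j(X_j) - E[f_j(X_j)]` admits a
martingale–coboundary decomposition with uniformly bounded `h_j`, uniformly bounded
martingale differences `M_j`, and `Σ_j Var(M_j(X_{j-1},X_j)) < ∞`. -/
theorem variance_dichotomy_doeblin
    (μ : Measure Ω) [IsProbabilityMeasure μ]
    (X : ∀ j, Ω → 𝒳 j) (κ : ∀ j n, Kernel (𝒳 j) (𝒳 (j + n)))
    (hMarkov : IsInhomMarkov μ X κ)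
    (n₀ : ℕ) (hn₀ : 0 < n₀) (γ : ℝ) (hγ : γ ∈ Set.Ioo (0 : ℝ) 1)
    (m : ∀ j, Measure (𝒳 j)) (hm : ∀ j, IsProbabilityMeasure (m j))
    (hDoeblin : ∀ j (x : 𝒳 j) (Γ : Set (𝒳 (j + n₀))), MeasurableSet Γ →
      ENNReal.ofReal γ * m (j + n₀) Γ ≤ κ j n₀ x Γ)
    (f : ∀ j, 𝒳 j → ℝ) (hfmeas : ∀ j, Measurable (f j))
    (C : ℝ) (hbdd : ∀ j, ∀ᵐ ω ∂μ, |f j (X j ω)| ≤ C)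
    (S : ℕ → Ω → ℝ) (hS : ∀ n ω, S n ω = ∑ j ∈ Finset.range n, f j (X j ω))
    (σs : ℕ → ℝ) (hσ : ∀ n, σs n = Real.sqrt (variance (S n) μ)) :
    ((∃ B, ∀ n, σs n ≤ B) ↔
        atTop.liminf (fun n => (ENNReal.ofReal (σs n))) < ⊤) ∧
    ((∃ B, ∀ n, σs n ≤ B) ↔
      ∃ (h : ∀ j, 𝒳 j → ℝ) (M : ∀ j, 𝒳 j × 𝒳 (j + 1) → ℝ),
        (∀ j, Measurable (h j)) ∧ (∃ B, ∀ j x, |h j x| ≤ B) ∧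
        (∀ j, Measurable (M j)) ∧ (∃ B, ∀ j y, |M j y| ≤ B) ∧
        -- `M_j(X_{j-1}, X_j)` is a martingale difference w.r.t. the natural filtration
        (∀ j, (μ[(fun ω => M j (X j ω, X (j + 1) ω)) | pastSigma X j]) =ᵐ[μ] 0) ∧
        (Summable fun j => variance (fun ω => M j (X j ω, X (j + 1) ω)) μ) ∧
        (∀ j, ∀ᵐ ω ∂μ,
          f (j + 1) (X (j + 1) ω) =
            (∫ ω', f (j + 1) (X (j + 1) ω') ∂μ) + h (j + 1) (X (j + 1) ω)
              - h j (X j ω) + M j (X j ω, X (j + 1) ω))) := by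
  obtain ⟨h, M, hh, ⟨A, hA⟩, hMm, ⟨B, hB⟩, hmd, heq⟩ :=
    vd_construct hMarkov n₀ hn₀ γ hγ m hm hDoeblin f hfmeas C hbdd
  have hvar0 : ∀ n, 0 ≤ variance (S n) μ := fun n => variance_nonneg _ _
  have h12 : (∃ B, ∀ n, σs n ≤ B) → atTop.liminf (fun n => (ENNReal.ofReal (σs n))) < ⊤ := by
    rintro ⟨R, hR⟩
    have : atTop.liminf (fun n => (ENNReal.ofReal (σs n))) ≤
        atTop.liminf (fun _ : ℕ => ENNReal.ofReal R) :=
      liminf_le_liminf (Eventually.of_forall fun n => ENNReal.ofReal_le_ofReal (hR n))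
    refine this.trans_lt ?_
    simp
  have h23 : atTop.liminf (fun n => (ENNReal.ofReal (σs n))) < ⊤ →
      Summable fun j => variance (fun ω => M j (X j ω, X (j + 1) ω)) μ := by
    intro hl
    obtain ⟨b, hb1, -⟩ := ENNReal.lt_iff_exists_nnreal_btwn.1 hl
    have hfr := frequently_lt_of_liminf_lt (by isBoundedDefault) hb1
    obtain ⟨K, hK⟩ := vd_sandwich hMarkov.meas f hfmeas C hbdd S hS h M A hA hMm B hB hmd heq
    refine summable_of_sum_range_le (c := 2 * (b : ℝ) ^ 2 + K) (fun j => variance_nonneg _ _) ?_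
    intro N
    obtain ⟨n, hn, hlt⟩ := frequently_atTop.1 hfr (N + 1)
    obtain ⟨n', rfl⟩ : ∃ n', n = n' + 1 := ⟨n - 1, by omega⟩
    have hs : σs (n' + 1) ≤ b := by
      have := (ENNReal.ofReal_lt_coe_iff (by rw [hσ]; exact Real.sqrt_nonneg _)).1 hlt
      exact this.le
    have hv : variance (S (n' + 1)) μ ≤ (b : ℝ) ^ 2 := by
      rw [hσ] at hs
      exact (Real.sqrt_le_left b.2).1 hs
    have h1 := (hK n').2
    have h2 : ∑ j ∈ Finset.range N, variance (fun ω => M j (X j ω, X (j + 1) ω)) μ ≤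
        ∑ j ∈ Finset.range n', variance (fun ω => M j (X j ω, X (j + 1) ω)) μ :=
      Finset.sum_le_sum_of_subset_of_nonneg (by simp; omega) fun _ _ _ => variance_nonneg _ _
    linarith
  have h31 : ∀ (h : ∀ j, 𝒳 j → ℝ) (M : ∀ j, 𝒳 j × 𝒳 (j + 1) → ℝ)
        (_ : ∃ B, ∀ j x, |h j x| ≤ B)
        (_ : ∀ j, Measurable (M j)) (_ : ∃ B, ∀ j y, |M j y| ≤ B)
        (_ : ∀ j, (μ[(fun ω => M j (X j ω, X (j + 1) ω)) | pastSigma X j]) =ᵐ[μ] 0)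
        (_ : Summable fun j => variance (fun ω => M j (X j ω, X (j + 1) ω)) μ)
        (_ : ∀ j, ∀ᵐ ω ∂μ,
          f (j + 1) (X (j + 1) ω) =
            (∫ ω', f (j + 1) (X (j + 1) ω') ∂μ) + h (j + 1) (X (j + 1) ω)
              - h j (X j ω) + M j (X j ω, X (j + 1) ω)), ∃ B, ∀ n, σs n ≤ B := by
    rintro h M ⟨A, hA⟩ hMm ⟨B, hB⟩ hmd hsum heq
    obtain ⟨K, hK⟩ := vd_sandwich hMarkov.meas f hfmeas C hbdd S hS h M A hA hMm B hB hmd heq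
    refine ⟨√(2 * (∑' j, variance (fun ω => M j (X j ω, X (j + 1) ω)) μ) + K), fun n => ?_⟩
    rw [hσ]
    cases n with
    | zero =>
      have : S 0 = 0 := by ext ω; simp [hS]
      rw [this]; simp
    | succ n =>
      refine Real.sqrt_le_sqrt ((hK n).1.trans ?_)
      have := hsum.sum_le_tsum (Finset.range n) fun _ _ => variance_nonneg _ _
      linarith
  refine ⟨⟨h12, fun hl => h31 h M ⟨A, hA⟩ hMm ⟨B, hB⟩ hmd (h23 hl) heq⟩, ⟨fun hb => ?_, ?_⟩⟩
  · exact ⟨h, M, hh, ⟨A, hA⟩, hMm, ⟨B, hB⟩, hmd, h23 (h12 hb), heq⟩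
  · rintro ⟨h, M, -, hA, hMm, hB, hmd, hs, heq⟩
    exact h31 h M hA hMm hB hmd hs heq

end
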